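/- Let B ⊂ A be a regular inclusion of simple unital C*-algebras with a finite-index conditional expectation, E₀ : A → B the minimal conditional expectation, C := C*(B ∪ C_A(B)), and F : A → C a conditional expectation with (E₀|_C) ∘ F = E₀. Let G := W(B ⊂ A) be the generalized Weyl group (a finite group) and let u : G → N_A(B) be any set-theoretic section of the quotient map N_A(B) → W(B ⊂ A) with u_e = 1. Then (u_g)_{g ∈ G} is a two-sided orthonormal quasi-basis for F: F(u_g* u_h) = δ_{g,h}·1 for all g, h ∈ G, and x = Σ_{g ∈ G} u_g F(u_g* x) = Σ_{g ∈ G} F(x u_g*) u_g for every x ∈ A. In particular, Σ_{g ∈ G} u_g u_g* = |G|·1, i.e., Ind(F) = |G|. -/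

import Mathlib

/-!
The theorem rests on one vanishing statement (`condExp_eq_zero`): if `v` normalizes `B` and
`F v ≠ 0`, then `v ∈ U(B)·U(C_A(B))`. For `d ∈ C_A(B)`, the element `b = E₀ (v * d)` of `B` satisfies
`b x = (v x v*) b` for all `x ∈ B`. If `b ≠ 0`, then `b* b` and `b b*` are central in the simple
algebra `B`, hence equal positive scalars, so `b` is a multiple of a unitary `w ∈ B`, and `w* v`
centralizes `B` (`mem_UBC_of_intertwiner`). If instead `E₀ (v * d) = 0` for every `d`, then
`E₀ (F v * x) = 0` for `x` in the dense span of `C_A(B)·B` in `C`, hence for all `x ∈ C` by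
continuity of `E₀`, hence for all `x ∈ A` because `E₀ ∘ F = E₀`; the quasi-basis of `E₀` yields
`F v = 0`.

Orthonormality is immediate. Each reconstruction formula is an identity of continuous linear
maps; a normalizer `v` is `u_i c = c' u_i` with `c, c' ∈ C`, so orthonormality gives the formula on
the normalizer, whose span is dense by regularity (`eq_zero_of_mem_closure_adjoin`).
-/

namespace RegularInclusion

variable {A : Type*} [NormedRing A] [StarRing A] [CStarRing A] [CompleteSpace A]
  [NormedAlgebra ℂ A] [StarModule ℂ A]

/-- A conditional expectation of `A` onto the subset `B`: a `ℂ`-linear positive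
`B`-bimodular projection of `A` onto `B`. -/
def IsCondExp (B : Set A) (E : A →ₗ[ℂ] A) : Prop :=
  (∀ x, E x ∈ B) ∧ (∀ b ∈ B, E b = b) ∧
  (∀ x, ∃ y, E (star x * x) = star y * y) ∧
  (∀ b₁ ∈ B, ∀ b₂ ∈ B, ∀ x, E (b₁ * x * b₂) = b₁ * E x * b₂)

/-- `l` is a right quasi-basis for `E`, witnessing finite index. -/
def IsRightQB (E : A →ₗ[ℂ] A) {n : ℕ} (l : Fin n → A) : Prop :=
  ∀ x, x = ∑ i, E (x * l i) * star (l i)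

/-- The centralizer (relative commutant) `C_A(B)` of `B` in `A`. -/
def cent (B : Set A) : Set A := {x | ∀ b ∈ B, x * b = b * x}

/-- The normalizer `N_A(B) = {u ∈ U(A) : uBu* = B}` of `B` in `A`. -/
def normalizer (B : Set A) : Set A :=
  {u | u ∈ unitary A ∧ (fun x => u * x * star u) '' B = B}

/-- The set `U(B)` of unitaries of `B`. -/
def UB (B : Set A) : Set A := {b | b ∈ B ∧ b ∈ unitary A}

/-- The set `U(B)·U(C_A(B))` of products of a unitary of `B` and a unitary of
the centralizer of `B`. -/
def UBC (B : Set A) : Set A :=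
  {x | ∃ b c, b ∈ B ∧ b ∈ unitary A ∧ c ∈ cent B ∧ c ∈ unitary A ∧ x = b * c}

/-- Simplicity of the C*-algebra (given as the subset `S` of `A`): the only closed
two-sided ideals of `S` are `{0}` and `S`. -/
def IsSimpleCStar (S : Set A) : Prop :=
  ∀ I : Set A, I ⊆ S → IsClosed I → (0 : A) ∈ I →
    (∀ x ∈ I, ∀ y ∈ I, x + y ∈ I) →
    (∀ x ∈ I, ∀ b ∈ S, x * b ∈ I ∧ b * x ∈ I) →
    I = {0} ∨ I = S

/-- The intermediate C*-subalgebra `C := C*(B ∪ C_A(B))` generated by `B` and the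
centralizer of `B`. -/
def genC (B : Set A) : StarSubalgebra ℂ A :=
  (StarAlgebra.adjoin ℂ (B ∪ cent B)).topologicalClosure

/-- Regularity of the inclusion `B ⊆ A`: the normalizer of `B` generates `A` as a
C*-algebra. -/
def IsRegular (B : Set A) : Prop :=
  (StarAlgebra.adjoin ℂ (normalizer B)).topologicalClosure = ⊤

/-- `E₀` is the minimal conditional expectation of `A` onto `B`: the finite-index
conditional expectation whose (scalar) Watatani index is least among all finite-index
conditional expectations onto `B`. -/
def IsMinimalCondExp (B : Set A) (E₀ : A →ₗ[ℂ] A) : Prop :=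
  IsCondExp B E₀ ∧
  ∃ (r₀ : ℝ) (n : ℕ) (l : Fin n → A), IsRightQB E₀ l ∧
    (∑ i, l i * star (l i)) = (r₀ : ℂ) • 1 ∧
    ∀ E : A →ₗ[ℂ] A, IsCondExp B E → ∀ (m : ℕ) (μ : Fin m → A), IsRightQB E μ →
      ∀ r : ℝ, (∑ i, μ i * star (μ i)) = (r : ℂ) • 1 → r₀ ≤ r

/-! ### Continuity and density -/

/-- Positive maps between C*-algebras are bounded, so a conditional expectation is continuous. -/
lemma IsCondExp.continuous {B : Set A} {E : A →ₗ[ℂ] A} (hE : IsCondExp B E) :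
    Continuous E := by
  let : CStarAlgebra A := {}
  let : PartialOrder A := CStarAlgebra.spectralOrder A
  have : StarOrderedRing A := CStarAlgebra.spectralOrderedRing A
  have hpos : ∀ x : A, 0 ≤ x → 0 ≤ E x := by
    intro x hx
    obtain ⟨y, rfl⟩ := CStarAlgebra.nonneg_iff_eq_star_mul_self.mp hx
    obtain ⟨z, hz⟩ := hE.2.2.1 y
    rw [hz]
    exact star_mul_self_nonneg z
  exact map_continuous (PositiveLinearMap.mk₀ E hpos)

/-- The linear span of a self-adjoint multiplicative monoid `S` is the *-algebra it generates,
so a continuous linear map that vanishes on `S` vanishes on the C*-algebra generated by `S`. -/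
lemma eq_zero_of_mem_closure_adjoin {S : Set A} (h1 : (1 : A) ∈ S)
    (hmul : ∀ x ∈ S, ∀ y ∈ S, x * y ∈ S) (hstar : ∀ x ∈ S, star x ∈ S)
    (f : A →ₗ[ℂ] A) (hf : Continuous f) (hS : ∀ x ∈ S, f x = 0)
    {x : A} (hx : x ∈ (StarAlgebra.adjoin ℂ S).topologicalClosure) : f x = 0 := by
  have hspan : ∀ y ∈ StarAlgebra.adjoin ℂ S, y ∈ Submodule.span ℂ S := by
    intro y hy
    induction hy using StarAlgebra.adjoin_induction with
    | mem y hy => exact Submodule.subset_span hy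
    | algebraMap r =>
      rw [Algebra.algebraMap_eq_smul_one]
      exact Submodule.smul_mem _ _ (Submodule.subset_span h1)
    | add a b _ _ ha hb => exact add_mem ha hb
    | mul a b _ _ ha hb =>
      have hab := Submodule.mul_mem_mul ha hb
      rw [Submodule.span_mul_span] at hab
      refine Submodule.span_mono ?_ hab
      rintro _ ⟨p, hp, q, hq, rfl⟩
      exact hmul p hp q hq
    | star a hmem ha =>
      clear hmem
      induction ha using Submodule.span_induction with
      | mem z hz => exact Submodule.subset_span (hstar z hz)
      | zero => simp
      | add p q _ _ hp hq => rw [star_add]; exact add_mem hp hq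
      | smul r p _ hp => rw [star_smul]; exact Submodule.smul_mem _ _ hp
  have hker : Submodule.span ℂ S ≤ LinearMap.ker f :=
    Submodule.span_le.mpr fun y hy => hS y hy
  have hx' : x ∈ closure (StarAlgebra.adjoin ℂ S : Set A) := hx
  have hcl : IsClosed {y : A | f y = 0} := isClosed_eq hf continuous_const
  exact closure_minimal (fun y hy => hker (hspan y hy)) hcl hx'

/-! ### The centre of a simple C*-algebra -/

/-- The centre of a simple unital C*-algebra consists of scalars: for `t` in the spectrum of the
central element `z`, the closed ideal generated by `z - t` is proper, hence zero. -/
lemma exists_eq_smul_one_of_central [Nontrivial A] {B : StarSubalgebra ℂ A}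
    (hBclosed : IsClosed (B : Set A)) (hBsimple : IsSimpleCStar (B : Set A))
    {z : A} (hz : z ∈ B) (hcomm : ∀ b ∈ B, z * b = b * z) : ∃ t : ℂ, z = t • (1 : A) := by
  obtain ⟨t, ht⟩ := spectrum.nonempty z
  refine ⟨t, ?_⟩
  set w : A := z - t • (1 : A) with hw
  have hwB : w ∈ B := sub_mem hz (B.smul_mem (one_mem B) t)
  have hwcomm : ∀ b ∈ B, w * b = b * w := by
    intro b hb
    simp [hw, sub_mul, mul_sub, hcomm b hb]
  have hwnu : ¬ IsUnit w := by
    intro h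
    rw [spectrum.mem_iff, Algebra.algebraMap_eq_smul_one] at ht
    apply ht
    rw [← neg_sub]
    exact h.neg
  set J : Set A := (fun b => w * b) '' (B : Set A) with hJ
  have hJB : J ⊆ B := by
    rintro _ ⟨b, hb, rfl⟩
    exact mul_mem hwB hb
  rcases hBsimple (closure J) (closure_minimal hJB hBclosed) isClosed_closure
    (subset_closure ⟨0, zero_mem B, by simp⟩)
    (fun x hx y hy => map_mem_closure₂ continuous_add hx hy (by
      rintro _ ⟨a, ha, rfl⟩ _ ⟨b, hb, rfl⟩
      exact ⟨a + b, add_mem ha hb, mul_add _ _ _⟩))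
    (fun x hx b hb => ⟨map_mem_closure (f := fun y => y * b) (by fun_prop) hx (by
        rintro _ ⟨a, ha, rfl⟩
        exact ⟨a * b, mul_mem ha hb, (mul_assoc _ _ _).symm⟩),
      map_mem_closure (f := fun y => b * y) (by fun_prop) hx (by
        rintro _ ⟨a, ha, rfl⟩
        refine ⟨b * a, mul_mem hb ha, ?_⟩
        simp only
        rw [← mul_assoc, hwcomm b hb, mul_assoc])⟩) with h | h
  · have hw0 : w ∈ closure J := subset_closure ⟨1, one_mem B, mul_one w⟩
    rw [h] at hw0
    exact sub_eq_zero.mp hw0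
  · exfalso
    have h1 : (1 : A) ∈ closure J := by rw [h]; exact one_mem B
    -- invertible elements form a neighbourhood of `1`, so some `w * b` is invertible
    obtain ⟨y, hy, ⟨b, hb, rfl⟩⟩ := mem_closure_iff_nhds.mp h1 {y : A | IsUnit y}
      (Units.isOpen.mem_nhds isUnit_one)
    exact hwnu ((Commute.isUnit_mul_iff (hwcomm b hb)).mp hy).1

/-- If a nonzero `b` in the simple algebra `B` intertwines the identity with `Ad v`, then `b* b` and
`b b*` are central in `B`, hence scalars, and `b` is a multiple of a unitary `w` with
`Ad w = Ad v` on `B`; so `w* v` centralizes `B`. -/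
lemma mem_UBC_of_intertwiner {B : StarSubalgebra ℂ A}
    (hBclosed : IsClosed (B : Set A)) (hBsimple : IsSimpleCStar (B : Set A))
    {v : A} (hv : v ∈ normalizer (B : Set A)) {b : A} (hb : b ∈ B) (hb0 : b ≠ 0)
    (hint : ∀ x ∈ B, b * x = v * x * star v * b) : v ∈ UBC (B : Set A) := by
  have : Nontrivial A := ⟨b, 0, hb0⟩
  let : CStarAlgebra A := {}
  obtain ⟨hvu, hvB⟩ := hv
  have hvv : star v * v = 1 := Unitary.star_mul_self_of_mem hvu
  -- the adjoint of the intertwining relation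
  have hint' : ∀ x ∈ B, x * star b = star b * (v * x * star v) := by
    intro x hx
    have := congrArg star (hint (star x) (star_mem hx))
    simpa [mul_assoc] using this
  obtain ⟨s, hs⟩ := exists_eq_smul_one_of_central hBclosed hBsimple
    (z := star b * b) (mul_mem (star_mem hb) hb) (by
      intro x hx
      rw [mul_assoc, hint x hx, ← mul_assoc, ← hint' x hx, mul_assoc])
  obtain ⟨t, ht⟩ := exists_eq_smul_one_of_central hBclosed hBsimple
    (z := b * star b) (mul_mem hb (star_mem hb)) (by
      intro y hy
      have hy' : y ∈ (fun x => v * x * star v) '' (B : Set A) := by rw [hvB]; exact hy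
      obtain ⟨x, hx, rfl⟩ := hy'
      simp only
      rw [mul_assoc, ← hint' x hx, ← mul_assoc, hint x hx, mul_assoc])
  have hst : s = t := by
    have h : b * (star b * b) = (b * star b) * b := (mul_assoc _ _ _).symm
    rw [hs, ht] at h
    simp only [mul_smul_comm, mul_one, smul_mul_assoc, one_mul] at h
    exact smul_left_injective ℂ hb0 h
  subst hst
  have hs0 : s ≠ 0 := by
    rintro rfl
    rw [zero_smul] at hs
    exact hb0 (CStarRing.star_mul_self_eq_zero_iff b |>.mp hs)
  have hreal : (starRingEnd ℂ) s = s := by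
    have h := congrArg star hs
    rw [star_smul, star_mul, star_star, star_one, hs] at h
    exact (smul_left_injective ℂ (one_ne_zero (α := A)) h).symm
  obtain ⟨r, rfl⟩ := Complex.conj_eq_iff_real.mp hreal
  have hr0 : 0 ≤ r := by
    refine spectrum_star_mul_self_nonneg (b := b) r ?_
    have : star b * b = algebraMap ℝ A r := by
      rw [hs, Algebra.algebraMap_eq_smul_one]
      exact Complex.coe_smul r 1
    rw [this, spectrum.scalar_eq]
    exact Set.mem_singleton r
  have hr : 0 < r := lt_of_le_of_ne hr0 (by rintro rfl; simp at hs0)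
  set k : ℂ := Complex.ofReal (Real.sqrt r)⁻¹ with hk
  have hkk : k * k * (r : ℂ) = 1 := by
    rw [hk, ← Complex.ofReal_mul, ← Complex.ofReal_mul, ← mul_inv,
      Real.mul_self_sqrt hr0, inv_mul_cancel₀ hr.ne', Complex.ofReal_one]
  have hkstar : star k = k := Complex.conj_ofReal _
  set w : A := k • b with hw
  have hwB : w ∈ B := B.smul_mem hb k
  have hw1 : star w * w = 1 := by
    rw [hw, star_smul, hkstar, smul_mul_smul_comm, hs, smul_smul, hkk, one_smul]
  have hw2 : w * star w = 1 := by
    rw [hw, star_smul, hkstar, smul_mul_smul_comm, ht, smul_smul, hkk, one_smul]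
  have hwint : ∀ x ∈ B, x * star w = star w * (v * x * star v) := by
    intro x hx
    rw [hw, star_smul, mul_smul_comm, hint' x hx, smul_mul_assoc]
  have hwu : w ∈ unitary A := Unitary.mem_iff.mpr ⟨hw1, hw2⟩
  refine ⟨w, star w * v, hwB, hwu, ?_, mul_mem (Unitary.star_mem hwu) hvu, ?_⟩
  · intro x hx
    rw [← mul_assoc, hwint x hx]
    simp only [mul_assoc, hvv, mul_one]
  · rw [← mul_assoc, hw2, one_mul]

/-! ### The normalizer and the subgroup `U(B)·U(C_A(B))` -/

lemma normalizer_one {B : Set A} : (1 : A) ∈ normalizer B :=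
  ⟨one_mem _, by simp⟩

lemma normalizer_mul {B : Set A} {v w : A} (hv : v ∈ normalizer B) (hw : w ∈ normalizer B) :
    v * w ∈ normalizer B := by
  refine ⟨mul_mem hv.1 hw.1, ?_⟩
  have h : (fun x => v * w * x * star (v * w)) =
      (fun x => v * x * star v) ∘ (fun x => w * x * star w) := by
    funext x
    simp [mul_assoc]
  rw [h, Set.image_comp, hw.2, hv.2]

lemma normalizer_star {B : Set A} {v : A} (hv : v ∈ normalizer B) :
    star v ∈ normalizer B := by
  refine ⟨Unitary.star_mem hv.1, ?_⟩
  have hvv : star v * v = 1 := Unitary.star_mul_self_of_mem hv.1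
  conv_lhs => rw [← hv.2]
  rw [← Set.image_comp]
  have h : ((fun x => star v * x * star (star v)) ∘ fun x => v * x * star v) = id := by
    funext x
    simp only [Function.comp, star_star, id, mul_assoc, hvv, mul_one]
    rw [← mul_assoc, hvv, one_mul]
  rw [h, Set.image_id]

lemma normalizer_conj_mem {B : Set A} {v b : A} (hv : v ∈ normalizer B) (hb : b ∈ B) :
    v * b * star v ∈ B := by
  have h : (fun x => v * x * star v) b ∈ B := by
    have himg := Set.mem_image_of_mem (fun x => v * x * star v) hb
    rwa [hv.2] at himg
  exact h

lemma cent_conj_mem {B : Set A} {v c : A} (hv : v ∈ normalizer B) (hc : c ∈ cent B) :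
    v * c * star v ∈ cent B := by
  intro b hb
  have hvv' : v * star v = 1 := Unitary.mul_star_self_of_mem hv.1
  have h := hc _ (normalizer_conj_mem (normalizer_star hv) hb)
  rw [star_star] at h
  calc v * c * star v * b = v * (c * (star v * b * v)) * star v := by
        simp only [mul_assoc, hvv', mul_one]
    _ = (v * star v) * b * (v * c * star v) := by rw [h]; simp only [mul_assoc]
    _ = b * (v * c * star v) := by rw [hvv', one_mul]

/-- `U(B)·U(C_A(B))` is stable under conjugation by the normalizer. -/
lemma UBC_conj_mem {B : Set A} {v x : A} (hv : v ∈ normalizer B) (hx : x ∈ UBC B) :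
    v * x * star v ∈ UBC B := by
  obtain ⟨b, c, hb, hbu, hc, hcu, rfl⟩ := hx
  have hvv : star v * v = 1 := Unitary.star_mul_self_of_mem hv.1
  refine ⟨v * b * star v, v * c * star v, normalizer_conj_mem hv hb,
    mul_mem (mul_mem hv.1 hbu) (Unitary.star_mem hv.1), cent_conj_mem hv hc,
    mul_mem (mul_mem hv.1 hcu) (Unitary.star_mem hv.1), ?_⟩
  calc v * (b * c) * star v = v * b * 1 * c * star v := by simp only [mul_assoc, one_mul]
    _ = v * b * star v * (v * c * star v) := by rw [← hvv]; simp only [mul_assoc]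

lemma subset_genC {B : Set A} {x : A} (hx : x ∈ B ∪ cent B) : x ∈ genC B :=
  (StarAlgebra.adjoin ℂ (B ∪ cent B)).le_topologicalClosure (StarAlgebra.subset_adjoin ℂ _ hx)

lemma UBC_subset_genC {B : Set A} {x : A} (hx : x ∈ UBC B) : x ∈ genC B := by
  obtain ⟨b, c, hb, -, hc, -, rfl⟩ := hx
  exact mul_mem (subset_genC (Or.inl hb)) (subset_genC (Or.inr hc))

/-- A continuous linear map that vanishes on all products `d * b` with `d ∈ C_A(B)` and `b ∈ B`
vanishes on `C*(B ∪ C_A(B))`. -/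
lemma eq_zero_of_mem_genC {B : StarSubalgebra ℂ A} (f : A →ₗ[ℂ] A) (hf : Continuous f)
    (h0 : ∀ d ∈ cent (B : Set A), ∀ b ∈ B, f (d * b) = 0)
    {x : A} (hx : x ∈ genC (B : Set A)) : f x = 0 := by
  set S : Set A := {y | ∃ d ∈ cent (B : Set A), ∃ b ∈ B, y = d * b} with hS
  have hone : (1 : A) ∈ cent (B : Set A) := fun b _ => by rw [one_mul, mul_one]
  refine eq_zero_of_mem_closure_adjoin (S := S) ⟨1, hone, 1, one_mem B, (mul_one 1).symm⟩
    ?_ ?_ f hf ?_ ?_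
  · rintro _ ⟨d, hd, b, hb, rfl⟩ _ ⟨d', hd', b', hb', rfl⟩
    refine ⟨d * d', fun y hy => ?_, b * b', mul_mem hb hb', ?_⟩
    · rw [mul_assoc, hd' y hy, ← mul_assoc, hd y hy, mul_assoc]
    · calc d * b * (d' * b') = d * (b * d') * b' := by simp only [mul_assoc]
        _ = d * (d' * b) * b' := by rw [hd' b hb]
        _ = d * d' * (b * b') := by simp only [mul_assoc]
  · rintro _ ⟨d, hd, b, hb, rfl⟩
    refine ⟨star d, fun y hy => ?_, star b, star_mem hb, ?_⟩
    · have h := congrArg star (hd (star y) (star_mem hy))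
      simpa using h.symm
    · rw [hd b hb, star_mul]
  · rintro _ ⟨d, hd, b, hb, rfl⟩
    exact h0 d hd b hb
  · refine StarSubalgebra.topologicalClosure_mono (StarAlgebra.adjoin_le ?_) hx
    rintro y (hy | hy)
    · exact StarAlgebra.subset_adjoin ℂ _ ⟨1, hone, y, hy, (one_mul y).symm⟩
    · exact StarAlgebra.subset_adjoin ℂ _ ⟨y, hy, 1, one_mem B, (mul_one y).symm⟩

/-! ### Vanishing of `F` off the trivial coset -/

/-- The key step: `F v = 0` for every normalizer `v` outside `U(B)·U(C_A(B))`. For `d ∈ C_A(B)` the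
element `E₀ (v * d)` of `B` intertwines the identity with `Ad v`, so it must vanish. Hence
`E₀ (F v * x) = 0` for `x` in `C*(B ∪ C_A(B))`, then for every `x`, and the quasi-basis of `E₀`
gives `F v = 0`. -/
lemma condExp_eq_zero {B : StarSubalgebra ℂ A}
    (hBclosed : IsClosed (B : Set A)) (hBsimple : IsSimpleCStar (B : Set A))
    {E₀ : A →ₗ[ℂ] A} (hE₀ : IsCondExp (B : Set A) E₀)
    {m : ℕ} {l : Fin m → A} (hl : IsRightQB E₀ l)
    {F : A →ₗ[ℂ] A} (hF : IsCondExp (genC (B : Set A) : Set A) F)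
    (hFcompat : ∀ x : A, E₀ (F x) = E₀ x)
    {v : A} (hv : v ∈ normalizer (B : Set A)) (hvn : v ∉ UBC (B : Set A)) : F v = 0 := by
  have hvv : star v * v = 1 := Unitary.star_mul_self_of_mem hv.1
  have hleft : ∀ b ∈ B, ∀ x, E₀ (b * x) = b * E₀ x := by
    intro b hb x
    simpa using hE₀.2.2.2 b hb 1 (one_mem B) x
  have hright : ∀ b ∈ B, ∀ x, E₀ (x * b) = E₀ x * b := by
    intro b hb x
    simpa using hE₀.2.2.2 1 (one_mem B) b hb x
  have hFright : ∀ c ∈ genC (B : Set A), ∀ x, F (x * c) = F x * c := by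
    intro c hc x
    simpa using hF.2.2.2 1 (one_mem (genC (B : Set A))) c hc x
  have hFleft : ∀ c ∈ genC (B : Set A), ∀ x, F (c * x) = c * F x := by
    intro c hc x
    simpa using hF.2.2.2 c hc 1 (one_mem (genC (B : Set A))) x
  have hvd : ∀ d ∈ cent (B : Set A), E₀ (v * d) = 0 := by
    intro d hd
    by_contra hne
    refine hvn (mem_UBC_of_intertwiner hBclosed hBsimple hv (hE₀.1 (v * d)) hne ?_)
    intro x hx
    rw [← hright x hx, ← hleft _ (normalizer_conj_mem hv hx)]
    congr 1
    calc v * d * x = v * (x * d) := by rw [mul_assoc, hd x hx]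
      _ = v * x * (star v * v) * d := by rw [hvv, mul_one, mul_assoc]
      _ = v * x * star v * (v * d) := by simp only [mul_assoc]
  have hC : ∀ x ∈ genC (B : Set A), E₀ (F v * x) = 0 := by
    intro x hx
    refine eq_zero_of_mem_genC (E₀ ∘ₗ LinearMap.mulLeft ℂ (F v)) ?_ ?_ hx
    · exact hE₀.continuous.comp (continuous_const_mul (F v))
    · intro d hd b hb
      have hdC : d ∈ genC (B : Set A) := subset_genC (Or.inr hd)
      rw [LinearMap.comp_apply, LinearMap.mulLeft_apply, ← mul_assoc, hright b hb,
        ← hFright d hdC, hFcompat, hvd d hd, zero_mul]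
  have hA : ∀ x, E₀ (F v * x) = 0 := by
    intro x
    rw [← hFcompat, hFleft _ (hF.1 v)]
    exact hC _ (hF.1 x)
  rw [hl (F v)]
  exact Finset.sum_eq_zero fun i _ => by rw [hA, zero_mul]

/-- for a regular inclusion `B ⊂ A` of simple unital C*-algebras with
minimal conditional expectation `E₀`, compatible conditional expectation
`F : A → C := C*(B ∪ C_A(B))`, and any complete set `(u_g)` of coset representatives of
the (finite) generalized Weyl group in `N_A(B)` containing `1`, the family `(u_g)` is a
two-sided orthonormal quasi-basis for `F`; in particular `Σ_g u_g u_g* = |G|·1`, i.e.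
`Ind(F) = |G|`. -/
theorem coset_representatives_are_two_sided_ON_quasi_basis_for_F
    (B : StarSubalgebra ℂ A) (hBclosed : IsClosed (B : Set A))
    (hAsimple : IsSimpleCStar (Set.univ : Set A))
    (hBsimple : IsSimpleCStar (B : Set A))
    (hreg : IsRegular (B : Set A))
    (E₀ : A →ₗ[ℂ] A) (hE₀ : IsMinimalCondExp (B : Set A) E₀)
    (F : A →ₗ[ℂ] A) (hF : IsCondExp (genC (B : Set A) : Set A) F)
    (hFcompat : ∀ x : A, E₀ (F x) = E₀ x)
    (n : ℕ) (u : Fin n → A)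
    (hu_mem : ∀ i, u i ∈ normalizer (B : Set A))
    (hu_distinct : ∀ i j, i ≠ j → star (u i) * u j ∉ UBC (B : Set A))
    (hu_cover : ∀ v ∈ normalizer (B : Set A), ∃ i, star (u i) * v ∈ UBC (B : Set A))
    (hu_one : ∃ i₀, u i₀ = 1) :
    (∀ i j, F (star (u i) * u j) = if i = j then (1 : A) else 0) ∧
    (∀ x : A, x = ∑ i, u i * F (star (u i) * x)) ∧
    (∀ x : A, x = ∑ i, F (x * star (u i)) * u i) ∧
    (∑ i, u i * star (u i)) = ((n : ℕ) : ℂ) • (1 : A) := by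
  obtain ⟨hE, -, m, l, hl, -, -⟩ := hE₀
  have hvan : ∀ v ∈ normalizer (B : Set A), v ∉ UBC (B : Set A) → F v = 0 := fun v hv hvn =>
    condExp_eq_zero hBclosed hBsimple hE hl hF hFcompat hv hvn
  have hFright : ∀ c ∈ genC (B : Set A), ∀ x, F (x * c) = F x * c := by
    intro c hc x
    simpa using hF.2.2.2 1 (one_mem (genC (B : Set A))) c hc x
  have hFleft : ∀ c ∈ genC (B : Set A), ∀ x, F (c * x) = c * F x := by
    intro c hc x
    simpa using hF.2.2.2 c hc 1 (one_mem (genC (B : Set A))) x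
  have hF1 : F 1 = 1 := hF.2.1 1 (one_mem (genC (B : Set A)))
  have hus : ∀ i, star (u i) * u i = 1 := fun i => Unitary.star_mul_self_of_mem (hu_mem i).1
  have hus' : ∀ i, u i * star (u i) = 1 := fun i => Unitary.mul_star_self_of_mem (hu_mem i).1
  have hL : ∀ i j, F (star (u i) * u j) = if i = j then (1 : A) else 0 := by
    intro i j
    split_ifs with h
    · rw [h, hus, hF1]
    · exact hvan _ (normalizer_mul (normalizer_star (hu_mem i)) (hu_mem j)) (hu_distinct i j h)
  have hR : ∀ i j, F (u i * star (u j)) = if i = j then (1 : A) else 0 := by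
    intro i j
    split_ifs with h
    · rw [h, hus', hF1]
    · refine hvan _ (normalizer_mul (hu_mem i) (normalizer_star (hu_mem j))) fun hmem => ?_
      -- left and right cosets of `U(B)·U(C_A(B))` agree, by conjugating with `u j`
      refine hu_distinct j i (Ne.symm h) ?_
      have := UBC_conj_mem (normalizer_star (hu_mem j)) hmem
      rwa [star_star, mul_assoc, mul_assoc, hus, mul_one] at this
  have hall : ∀ x : A,
      x ∈ (StarAlgebra.adjoin ℂ (normalizer (B : Set A))).topologicalClosure := by
    intro x
    have h : (StarAlgebra.adjoin ℂ (normalizer (B : Set A))).topologicalClosure = ⊤ := hreg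
    rw [h]
    exact StarSubalgebra.mem_top
  have hFc : Continuous F := hF.continuous
  refine ⟨hL, fun x => ?_, fun x => ?_, ?_⟩
  · have key := eq_zero_of_mem_closure_adjoin normalizer_one
      (fun x hx y hy => normalizer_mul hx hy) (fun x hx => normalizer_star hx)
      (LinearMap.id - ∑ i, LinearMap.mulLeft ℂ (u i) ∘ₗ F ∘ₗ LinearMap.mulLeft ℂ (star (u i)))
      (by
        have : Continuous fun x => x - ∑ i, u i * F (star (u i) * x) := by fun_prop
        convert this using 2
        simp)
      (by
        intro v hv
        obtain ⟨i, hi⟩ := hu_cover v hv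
        have hvi : v = u i * (star (u i) * v) := by rw [← mul_assoc, hus', one_mul]
        have hterm : ∀ j, F (star (u j) * v) = if j = i then star (u i) * v else 0 := by
          intro j
          conv_lhs => rw [hvi]
          rw [← mul_assoc, hFright _ (UBC_subset_genC hi), hL, ite_mul, one_mul, zero_mul]
        simp [hterm, ← hvi])
      (hall x)
    simpa [sub_eq_zero] using key
  · have key := eq_zero_of_mem_closure_adjoin normalizer_one
      (fun x hx y hy => normalizer_mul hx hy) (fun x hx => normalizer_star hx)
      (LinearMap.id - ∑ i, LinearMap.mulRight ℂ (u i) ∘ₗ F ∘ₗ LinearMap.mulRight ℂ (star (u i)))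
      (by
        have : Continuous fun x => x - ∑ i, F (x * star (u i)) * u i := by fun_prop
        convert this using 2
        simp)
      (by
        intro v hv
        obtain ⟨i, hi'⟩ := hu_cover v hv
        have hi : v * star (u i) ∈ UBC (B : Set A) := by
          have := UBC_conj_mem (hu_mem i) hi'
          rwa [← mul_assoc, hus', one_mul] at this
        have hvi : v = v * star (u i) * u i := by rw [mul_assoc, hus, mul_one]
        have hterm : ∀ j, F (v * star (u j)) = if i = j then v * star (u i) else 0 := by
          intro j
          conv_lhs => rw [hvi]
          rw [mul_assoc (v * star (u i)), hFleft _ (UBC_subset_genC hi), hR, mul_ite, mul_one,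
            mul_zero]
        simp [hterm, ← hvi])
      (hall x)
    simpa [sub_eq_zero] using key
  · simp [hus', Nat.cast_smul_eq_nsmul]

end RegularInclusion
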